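/- arXiv:1105.0059 — 2 statements merged into one kernel-verified Lean document; each statement's English description precedes it below -/
import Mathlib

section
/- Let G be a connected bipartite simple graph, let T be a spanning tree of G rooted at a vertex r, and sign the edges of T alternately with respect to their depth from r: a tree edge {u,v} with dist(r,v) = dist(r,u) + 1 receives the sign (-1)^{dist(r,u)}. Then for every edge e of G that is not an edge of T, the sum of the signs of the edges of the unique simple path in T joining the two endpoints of e equals 1 or -1. -/
/-!
The signs are the increments of a potential: put `f x = 1` if the depth `d x` of `x` is odd and
`f x = 0` otherwise. An edge from a parent `x` to a child `y` has sign `f y - f x`. A simple path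
in a rooted tree climbs towards the root up to some vertex `w` and descends from there on, because
each vertex has only one parent (`parent_unique`) and the path cannot turn back. The sum of the
signs therefore telescopes on both branches to `f u + f v - 2 * f w` (`sum_sign_path`). Adjacent
vertices of a bipartite graph have depths of different parity in a spanning tree, so
`f u + f v = 1`, and `1 - 2 * f w` is `1` or `-1`.
-/

/-- The parity potential: `0` at even depths and `1` at odd depths. It equals the alternating sum
`∑ i < n, (-1) ^ i` of the signs along the tree path from the root to a vertex of depth `n`. -/
def parityPotential (n : ℕ) : ℤ := if Even n then 0 else 1

theorem parityPotential_succ_sub (n : ℕ) :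
    (-1) ^ n = parityPotential (n + 1) - parityPotential n := by
  unfold parityPotential
  rcases Nat.even_or_odd n with h | h
  · simp [h, Nat.even_add_one]
  · simp [Nat.even_add_one, Nat.not_even_iff_odd.mpr h, h.neg_one_pow]

/-- In a rooted tree, a vertex has at most one neighbour closer to the root: geodesics through two
such neighbours would both be the unique path from the root. -/
theorem parent_unique {V : Type*} {T : SimpleGraph V} (hT : T.IsTree) {r x y z : V}
    (hx : T.Adj x z) (hy : T.Adj y z) (dx : T.dist r z = T.dist r x + 1)
    (dy : T.dist r z = T.dist r y + 1) : x = y := by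
  obtain ⟨p, hp⟩ := hT.1.exists_walk_length_eq_dist r x
  obtain ⟨q, hq⟩ := hT.1.exists_walk_length_eq_dist r y
  have hp' : (p.concat hx).IsPath :=
    SimpleGraph.Walk.isPath_of_length_eq_dist _ (by simp [hp, dx])
  have hq' : (q.concat hy).IsPath :=
    SimpleGraph.Walk.isPath_of_length_eq_dist _ (by simp [hq, dy])
  have h : p.concat hx = q.concat hy :=
    congrArg Subtype.val ((hT.isAcyclic.subsingleton_path r z).elim ⟨_, hp'⟩ ⟨_, hq'⟩)
  exact (SimpleGraph.Walk.concat_inj h).1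

section
variable {V : Type*} {T : SimpleGraph V} {r : V} {sign : Sym2 V → ℤ}

/-- A path whose first step leads away from the root keeps descending, so its signs telescope. -/
theorem sum_sign_descending (hT : T.IsTree)
    (hsign : ∀ u v : V, T.Adj u v → T.dist r v = T.dist r u + 1 →
      sign s(u, v) = (-1) ^ (T.dist r u)) {a b v : V} (p : T.Walk b v) (h : T.Adj a b)
    (hp : (SimpleGraph.Walk.cons h p).IsPath) (hd : T.dist r b = T.dist r a + 1) :
    ((SimpleGraph.Walk.cons h p).edges.map sign).sum =
      parityPotential (T.dist r v) - parityPotential (T.dist r a) := by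
  induction p generalizing a with
  | nil => simp [hsign _ _ h hd, hd, parityPotential_succ_sub]
  | @cons b c v h' q ih =>
    have hd' : T.dist r c = T.dist r b + 1 := by
      rcases hT.dist_eq_dist_add_one_of_adj r h' with h1 | h1
      · -- A step back towards the root would return to `a`, the only parent of `b`.
        have := parent_unique hT h h'.symm hd h1
        subst this
        simp at hp
      · exact h1
    have key := ih h' hp.of_cons hd'
    rw [SimpleGraph.Walk.edges_cons, List.map_cons, List.sum_cons, key, hsign _ _ h hd,
      parityPotential_succ_sub, hd]
    ring

/-- The witness `w` is the vertex of the path closest to the root. -/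
theorem sum_sign_path (hT : T.IsTree)
    (hsign : ∀ u v : V, T.Adj u v → T.dist r v = T.dist r u + 1 →
      sign s(u, v) = (-1) ^ (T.dist r u)) {u v : V} (p : T.Walk u v) (hp : p.IsPath) :
    ∃ w, (p.edges.map sign).sum = parityPotential (T.dist r u) + parityPotential (T.dist r v)
      - 2 * parityPotential (T.dist r w) := by
  induction p with
  | @nil u => exact ⟨u, by simp; ring⟩
  | @cons a b v h q ih =>
    rcases (hT.dist_eq_dist_add_one_of_adj r h).symm with hd | hd
    · exact ⟨a, by rw [sum_sign_descending hT hsign q h hp hd]; ring⟩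
    · obtain ⟨w, hw⟩ := ih hp.of_cons
      refine ⟨w, ?_⟩
      rw [SimpleGraph.Walk.edges_cons, List.map_cons, List.sum_cons, hw, Sym2.eq_swap,
        hsign _ _ h.symm hd, parityPotential_succ_sub, hd]
      ring

end

/-- Let `G` be a connected bipartite simple graph, `T` a spanning tree of `G`
rooted at `r`, with tree edges signed alternately with respect to depth from `r`:
a tree edge `{u, v}` with `dist r v = dist r u + 1` receives sign `(-1) ^ (dist r u)`.
Then for every edge of `G` not in `T`, the sum of the signs of the edges of the unique
simple path in `T` joining its endpoints equals `1` or `-1`. -/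
theorem stmt_0 {V : Type*} (G T : SimpleGraph V)
    (hG : G.Connected) (hbip : G.Colorable 2)
    (hle : T ≤ G) (htree : T.IsTree) (r : V)
    (sign : Sym2 V → ℤ)
    (hsign : ∀ u v : V, T.Adj u v → T.dist r v = T.dist r u + 1 →
      sign s(u, v) = (-1) ^ (T.dist r u))
    (u v : V) (huv : G.Adj u v) (hnt : ¬ T.Adj u v)
    (p : T.Path u v) :
    (p.val.edges.map sign).sum = 1 ∨ (p.val.edges.map sign).sum = -1 := by
  obtain ⟨w, hw⟩ := sum_sign_path htree hsign p.val p.property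
  have hpar : parityPotential (T.dist r u) + parityPotential (T.dist r v) = 1 := by
    let c : G.Coloring Bool := hbip.toColoring (by simp)
    have hc : ∀ x, Even (T.dist r x) ↔ (c r ↔ c x) := fun x => by
      obtain ⟨q, hq⟩ := htree.1.exists_walk_length_eq_dist r x
      have := c.even_length_iff_congr (q.mapLe hle)
      rwa [SimpleGraph.Walk.length_mapLe, hq] at this
    have hne : c u ≠ c v := c.valid huv
    unfold parityPotential
    simp only [hc]
    cases hr : c r <;> cases hu : c u <;> cases hv : c v <;> simp_all
  rw [hw, hpar]
  unfold parityPotential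
  split_ifs <;> simp
end

section
/- Let T be a tree (a connected acyclic simple graph) rooted at a vertex r, and sign the edges of T alternately with respect to their depth from r: an edge {u,v} with dist(r,v) = dist(r,u) + 1 receives the sign (-1)^{dist(r,u)}. Then for any two vertices a and b of T, if the unique simple path in T from a to b has odd length, the sum of the signs of its edges equals 1 or -1. -/
/-!
Write `d v = dist r v` and `f v = d v % 2`, which is the partial sum `∑_{i < d v} (-1)^i`. An edge
traversed from `u` to `v` away from the root contributes `f v - f u`; traversed towards the root it
contributes `f u - f v`. Since the parent of a vertex is unique (`IsTree.eq_of_adj_of_dist`), a path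
that has once moved away from the root does so until its end, so its sum telescopes
(`sum_sign_of_ascending`). A path from `a` to `b` therefore descends towards some turning vertex `c`
and then ascends, with sign sum `f a + f b - 2 f c` (`exists_sum_sign_eq`). For odd length the
depths of `a` and `b` have opposite parity, so `f a + f b = 1` and the sum is `1 - 2 f c = ±1`.
-/

/-- A vertex of a rooted tree has at most one parent. -/
lemma SimpleGraph.IsTree.eq_of_adj_of_dist {V : Type*} {T : SimpleGraph V} (hT : T.IsTree)
    {r u v w : V} (hu : T.Adj u v) (hw : T.Adj w v) (hdu : T.dist r v = T.dist r u + 1)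
    (hdw : T.dist r v = T.dist r w + 1) : u = w := by
  obtain ⟨p, hp⟩ := (hT.connected r u).exists_walk_length_eq_dist
  obtain ⟨q, hq⟩ := (hT.connected r w).exists_walk_length_eq_dist
  have hp' : (p.concat hu).IsPath := (p.concat hu).isPath_of_length_eq_dist (by simp [hp, hdu])
  have hq' : (q.concat hw).IsPath := (q.concat hw).isPath_of_length_eq_dist (by simp [hq, hdw])
  have h := congrArg SimpleGraph.Walk.penultimate ((hT.existsUnique_path r v).unique hp' hq')
  simpa using h

lemma neg_one_pow_eq_emod_sub_emod (n : ℕ) :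
    (-1 : ℤ) ^ n = ((n + 1 : ℕ) : ℤ) % 2 - (n : ℤ) % 2 := by
  rcases Nat.even_or_odd n with h | h
  · rw [h.neg_one_pow]; obtain ⟨k, rfl⟩ := h; omega
  · rw [h.neg_one_pow]; obtain ⟨k, rfl⟩ := h; omega

section AlternatingSign

variable {V : Type*} {T : SimpleGraph V} {r : V} {sign : Sym2 V → ℤ}

lemma sign_eq_of_dist
    (hsign : ∀ u v : V, T.Adj u v → T.dist r v = T.dist r u + 1 →
      sign s(u, v) = (-1) ^ (T.dist r u))
    {u v : V} (h : T.Adj u v) (hd : T.dist r v = T.dist r u + 1) :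
    sign s(u, v) = (T.dist r v : ℤ) % 2 - (T.dist r u : ℤ) % 2 := by
  rw [hsign u v h hd, neg_one_pow_eq_emod_sub_emod, hd]

/-- A path that avoids the parent of its starting vertex moves away from the root at every step,
so its sign sum telescopes. -/
lemma sum_sign_of_ascending (hT : T.IsTree)
    (hsign : ∀ u v : V, T.Adj u v → T.dist r v = T.dist r u + 1 →
      sign s(u, v) = (-1) ^ (T.dist r u))
    {a b : V} (p : T.Walk a b) (hp : p.IsPath)
    (hpar : ∀ x, T.Adj x a → T.dist r a = T.dist r x + 1 → x ∉ p.support) :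
    (p.edges.map sign).sum = (T.dist r b : ℤ) % 2 - (T.dist r a : ℤ) % 2 := by
  induction p with
  | nil => simp
  | @cons u v b h q ih =>
    rw [SimpleGraph.Walk.cons_isPath_iff] at hp
    rcases hT.dist_eq_dist_add_one_of_adj r h with hd | hd
    · exact absurd (by simp) (hpar v h.symm hd)
    · have hq := ih hp.1 fun x hx hdx ↦ hT.eq_of_adj_of_dist h hx hd hdx ▸ hp.2
      rw [SimpleGraph.Walk.edges_cons, List.map_cons, List.sum_cons, hq,
        sign_eq_of_dist hsign h hd]
      ring

/-- The proof takes for `c` the vertex of the path closest to the root, where the path turns from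
descending towards the root to ascending away from it. -/
lemma exists_sum_sign_eq (hT : T.IsTree)
    (hsign : ∀ u v : V, T.Adj u v → T.dist r v = T.dist r u + 1 →
      sign s(u, v) = (-1) ^ (T.dist r u))
    {a b : V} (p : T.Walk a b) (hp : p.IsPath) :
    ∃ c, (p.edges.map sign).sum =
      (T.dist r a : ℤ) % 2 + (T.dist r b : ℤ) % 2 - 2 * ((T.dist r c : ℤ) % 2) := by
  induction p with
  | @nil u => exact ⟨u, by simp; ring⟩
  | @cons u v b h q ih =>
    rw [SimpleGraph.Walk.cons_isPath_iff] at hp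
    rw [SimpleGraph.Walk.edges_cons, List.map_cons, List.sum_cons]
    rcases hT.dist_eq_dist_add_one_of_adj r h with hd | hd
    · obtain ⟨c, hc⟩ := ih hp.1
      refine ⟨c, ?_⟩
      rw [hc, Sym2.eq_swap, sign_eq_of_dist hsign h.symm hd]
      ring
    · refine ⟨u, ?_⟩
      rw [sign_eq_of_dist hsign h hd, sum_sign_of_ascending hT hsign q hp.1
        fun x hx hdx ↦ hT.eq_of_adj_of_dist h hx hd hdx ▸ hp.2]
      ring

lemma dist_add_dist_add_length_mod_two (hT : T.IsTree) (r : V) {a b : V} (p : T.Walk a b) :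
    (T.dist r a + T.dist r b + p.length) % 2 = 0 := by
  induction p with
  | nil => simp; omega
  | cons h q ih =>
    have := hT.dist_eq_dist_add_one_of_adj r h
    rw [SimpleGraph.Walk.length_cons]
    omega

end AlternatingSign

/-- Let `T` be a tree rooted at `r`, with edges signed alternately with respect
to depth from `r`: an edge `{u, v}` with `dist r v = dist r u + 1` receives sign
`(-1) ^ (dist r u)`. Then for any two vertices `a`, `b`, if the unique simple path in `T`
from `a` to `b` has odd length, the sum of the signs of its edges equals `1` or `-1`. -/
theorem stmt_2 {V : Type*} (T : SimpleGraph V) (htree : T.IsTree) (r : V)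
    (sign : Sym2 V → ℤ)
    (hsign : ∀ u v : V, T.Adj u v → T.dist r v = T.dist r u + 1 →
      sign s(u, v) = (-1) ^ (T.dist r u))
    (a b : V) (p : T.Path a b) (hodd : Odd p.val.length) :
    (p.val.edges.map sign).sum = 1 ∨ (p.val.edges.map sign).sum = -1 := by
  obtain ⟨c, hc⟩ := exists_sum_sign_eq htree hsign p.val p.property
  have hpar := dist_add_dist_add_length_mod_two htree r p.val
  rw [Nat.odd_iff] at hodd
  omega
end
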